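/- With Apéry's sequences B_n, A_n for ζ(2) and the coefficients a_{ν,μ} of the polynomials p_ν, one has ∑_{n=0}^∞ (B_n·ζ(2) − A_n) = 1 + ∑_{ν=1}^∞ ∑_{μ=0}^{2ν} a_{ν,μ} / ( (ν+1)(μ+1) ). -/

import Mathlib

open Finset Polynomial Real

/-- Apéry's denominators for `ζ(2)`: `Bₙ = ∑_{k=0}^n C(n,k)² C(n+k,k)`. -/
noncomputable def aperyB2 (n : ℕ) : ℝ :=
  ∑ k ∈ range (n + 1), (Nat.choose n k : ℝ) ^ 2 * (Nat.choose (n + k) k : ℝ)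

/-- Apéry's numerators for `ζ(2)`:
`Aₙ = ∑_{k=0}^n C(n,k)² C(n+k,k) (2 ∑_{m=1}^n (−1)^{m−1}/m²
  + ∑_{m=1}^k (−1)^{n+m−1}/(m² C(n,m) C(n+m,m)))`. -/
noncomputable def aperyA2 (n : ℕ) : ℝ :=
  ∑ k ∈ range (n + 1), (Nat.choose n k : ℝ) ^ 2 * (Nat.choose (n + k) k : ℝ) *
    (2 * (∑ m ∈ Icc 1 n, (-1 : ℝ) ^ (m - 1) / (m : ℝ) ^ 2)
      + ∑ m ∈ Icc 1 k,
          (-1 : ℝ) ^ (n + m - 1) /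
            ((m : ℝ) ^ 2 * (Nat.choose n m : ℝ) * (Nat.choose (n + m) m : ℝ)))

/-- The polynomials `p₁(t) = t²`, `p₂(t) = t⁴ − t² + t`,
`p_ν(t) = t² p_{ν−1}(t) + t(1−t) p_{ν−2}(t)` for `ν ≥ 3` (with `p₀ := 0`, unused). -/
noncomputable def pzeta : ℕ → Polynomial ℝ
  | 0 => 0
  | 1 => X ^ 2
  | 2 => X ^ 4 - X ^ 2 + X
  | (n + 3) => X ^ 2 * pzeta (n + 2) + X * (1 - X) * pzeta (n + 1)

/-- `a_{ν,μ}`, the coefficient of `t^μ` in `p_ν(t)`. -/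
noncomputable def azeta (ν μ : ℕ) : ℝ := (pzeta ν).coeff μ


open Filter Topology

noncomputable def apT (n k : ℕ) : ℝ :=
  ((n + k).factorial : ℝ) ^ 3 * (n.factorial : ℝ) /
    ((k.factorial : ℝ) * ((2 * n + k + 1).factorial : ℝ) ^ 2)

noncomputable def apSh (n k : ℕ) : ℝ :=
  (((n : ℝ) + 2 + k) ^ 2 - 3 * (2 * n + 3) * ((n : ℝ) + 2 + k) - 11 * ((n : ℝ) + 1) ^ 2
    - 9 * ((n : ℝ) + 1) - 2) * apT (n + 1) k

lemma apT_nonneg (n k : ℕ) : 0 ≤ apT n k := by unfold apT; positivity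

lemma fac_ne (n : ℕ) : (n.factorial : ℝ) ≠ 0 := by exact_mod_cast n.factorial_ne_zero

lemma apT_tele (n j : ℕ) :
    ((n : ℝ) + 2) ^ 2 * apT (n + 2) j
      + (11 * ((n : ℝ) + 1) ^ 2 + 11 * ((n : ℝ) + 1) + 3) * apT (n + 1) (j + 1)
      - ((n : ℝ) + 1) ^ 2 * apT n (j + 2) = apSh n (j + 2) - apSh n (j + 1) := by
  unfold apSh apT
  rw [show n + 2 + j = n + j + 2 by ring, show n + 1 + (j + 1) = n + j + 2 by ring,
    show n + (j + 2) = n + j + 2 by ring, show n + 1 + (j + 2) = n + j + 2 + 1 by ring,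
    show 2 * (n + 2) + j + 1 = 2 * n + j + 3 + 1 + 1 by ring,
    show 2 * (n + 1) + (j + 1) + 1 = 2 * n + j + 3 + 1 by ring,
    show 2 * (n + 1) + (j + 2) + 1 = 2 * n + j + 3 + 1 + 1 by ring,
    show 2 * n + (j + 2) + 1 = 2 * n + j + 3 by ring,
    Nat.factorial_succ (n + j + 2), Nat.factorial_succ (2 * n + j + 3 + 1),
    Nat.factorial_succ (2 * n + j + 3), Nat.factorial_succ (j + 1), Nat.factorial_succ j,
    Nat.factorial_succ (n + 1), Nat.factorial_succ n]
  have h1 := fac_ne (n + j + 2)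
  have h2 := fac_ne (2 * n + j + 3)
  have h3 := fac_ne n
  have h4 := fac_ne j
  push_cast
  generalize ((n + j + 2).factorial : ℝ) = a at *
  generalize ((2 * n + j + 3).factorial : ℝ) = b at *
  generalize (n.factorial : ℝ) = c at *
  generalize (j.factorial : ℝ) = d at *
  have e1 : (j : ℝ) + 1 ≠ 0 := by positivity
  have e2 : (j : ℝ) + 1 + 1 ≠ 0 := by positivity
  have e3 : (2 * n + j + 3 + 1 : ℝ) ≠ 0 := by positivity
  have e4 : (2 * n + j + 3 + 1 + 1 : ℝ) ≠ 0 := by positivity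
  field_simp
  ring

lemma apT_bdry (n : ℕ) :
    (11 * ((n : ℝ) + 1) ^ 2 + 11 * ((n : ℝ) + 1) + 3) * apT (n + 1) 0
      - ((n : ℝ) + 1) ^ 2 * (apT n 0 + apT n 1) = apSh n 1 := by
  unfold apSh apT
  rw [show n + 1 + 0 = n + 1 by ring,
    show n + 0 = n by ring, 
    show 2 * (n + 1) + 0 + 1 = 2 * n + 1 + 1 + 1 by ring,
    show 2 * n + 0 + 1 = 2 * n + 1 by ring,
    Nat.factorial_succ (2 * n + 1 + 1 + 1), Nat.factorial_succ (2 * n + 1 + 1),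
    Nat.factorial_succ (2 * n + 1),
    Nat.factorial_succ (n + 1), Nat.factorial_succ n]
  have h2 := fac_ne (2 * n + 1)
  have h3 := fac_ne n
  simp only [Nat.factorial_zero, Nat.factorial_one]
  push_cast
  generalize ((2 * n + 1).factorial : ℝ) = b at *
  generalize (n.factorial : ℝ) = c at *
  have e3 : (2 * n + 1 + 1 : ℝ) ≠ 0 := by positivity
  have e4 : (2 * n + 1 + 1 + 1 : ℝ) ≠ 0 := by positivity
  have e5 : (2 * n + 1 + 1 + 1 + 1 : ℝ) ≠ 0 := by positivity
  field_simp
  ring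

lemma apT_zero (k : ℕ) : apT 0 k = 1 / ((k : ℝ) + 1) ^ 2 := by
  unfold apT
  have := fac_ne k
  simp only [zero_add, mul_zero, Nat.factorial_succ, Nat.factorial_zero]
  push_cast
  field_simp

lemma apT_one (k : ℕ) : apT 1 k = ((k : ℝ) + 1) / (((k : ℝ) + 2) ^ 2 * ((k : ℝ) + 3) ^ 2) := by
  unfold apT
  have := fac_ne k
  rw [show 2 * 1 + k + 1 = k + 1 + 1 + 1 by ring, show 1 + k = k + 1 by ring]
  simp only [Nat.factorial_succ, Nat.factorial_zero]
  push_cast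
  have e1 : (k : ℝ) + 1 ≠ 0 := by positivity
  have e2 : (k : ℝ) + 1 + 1 ≠ 0 := by positivity
  have e3 : (k : ℝ) + 1 + 1 + 1 ≠ 0 := by positivity
  have e2' : (k : ℝ) + 2 ≠ 0 := by positivity
  have e3' : (k : ℝ) + 3 ≠ 0 := by positivity
  field_simp
  ring

lemma apT_succ_le (n k : ℕ) : apT (n + 1) k ≤ (1 / 2) * apT n k := by
  have key : apT (n + 1) k = (((n : ℝ) + 1) * (n + k + 1) ^ 3 /
      ((2 * n + k + 2) ^ 2 * (2 * n + k + 3) ^ 2)) * apT n k := by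
    unfold apT
    rw [show n + 1 + k = n + k + 1 by ring, show 2 * (n + 1) + k + 1 = 2 * n + k + 1 + 1 + 1 by ring]
    simp only [Nat.factorial_succ (n + k), Nat.factorial_succ (2 * n + k + 1 + 1),
      Nat.factorial_succ (2 * n + k + 1), Nat.factorial_succ n]
    have h1 := fac_ne (n + k)
    have h2 := fac_ne (2 * n + k + 1)
    have h3 := fac_ne n
    have h4 := fac_ne k
    push_cast
    generalize ((n + k).factorial : ℝ) = a at *
    generalize ((2 * n + k + 1).factorial : ℝ) = b at *
    generalize (n.factorial : ℝ) = c at *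
    generalize (k.factorial : ℝ) = d at *
    have e1 : (2 * n + k + 1 + 1 : ℝ) ≠ 0 := by positivity
    have e2 : (2 * n + k + 1 + 1 + 1 : ℝ) ≠ 0 := by positivity
    have e3 : (2 * n + k + 2 : ℝ) ≠ 0 := by positivity
    have e4 : (2 * n + k + 3 : ℝ) ≠ 0 := by positivity
    field_simp
    ring
  rw [key]
  refine mul_le_mul_of_nonneg_right ?_ (apT_nonneg n k)
  rw [div_le_iff₀ (by positivity)]
  have hn : (0 : ℝ) ≤ n := by positivity
  have hk : (0 : ℝ) ≤ k := by positivity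
  have h1 : ((n : ℝ) + 1) ≤ 1 / 2 * (2 * n + k + 2) := by linarith
  have h2 : ((n : ℝ) + k + 1) ^ 3 ≤ (2 * n + k + 2) * (2 * n + k + 3) ^ 2 := by
    rw [pow_succ' _ 2]
    gcongr <;> linarith
  calc _ ≤ (1 / 2 * (2 * (n : ℝ) + k + 2)) * ((2 * n + k + 2) * (2 * n + k + 3) ^ 2) := by gcongr
    _ = _ := by ring

lemma apT_le (n k : ℕ) : apT n k ≤ (1 / 2) ^ n * (1 / ((k : ℝ) + 1) ^ 2) := by
  induction n with
  | zero => simp [apT_zero]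
  | succ n ih =>
    refine (apT_succ_le n k).trans ?_
    rw [pow_succ', mul_assoc]
    gcongr

lemma summable_inv_sq : Summable (fun k : ℕ => 1 / ((k : ℝ) + 1) ^ 2) := by
  have := (summable_nat_add_iff 1).2 (hasSum_zeta_two.summable)
  simpa using this

lemma apT_summable (n : ℕ) : Summable (apT n) :=
  Summable.of_nonneg_of_le (apT_nonneg n) (apT_le n) (summable_inv_sq.mul_left _)

lemma apT_succ_le_one (n k : ℕ) : apT (n + 1) k ≤ 1 / ((k : ℝ) + 1) ^ 3 := by
  induction n with
  | zero =>
    rw [zero_add, apT_one, div_le_div_iff₀ (by positivity) (by positivity)]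
    have hk : (0 : ℝ) ≤ k := by positivity
    have : ((k : ℝ) + 1) ^ 2 * (k + 1) ^ 2 ≤ (k + 2) ^ 2 * (k + 3) ^ 2 := by
      gcongr <;> norm_num
    linarith
  | succ n ih =>
    refine (apT_succ_le (n + 1) k).trans ?_
    have := apT_nonneg (n + 1) k
    linarith

lemma apSh_tendsto (n : ℕ) : Tendsto (apSh n) atTop (𝓝 0) := by
  have hinv : Tendsto (fun k : ℕ => 1 / ((k : ℝ) + 1)) atTop (𝓝 0) :=
    tendsto_one_div_add_atTop_nhds_zero_nat
  refine squeeze_zero_norm (a := fun k : ℕ => (100 * ((n : ℝ) + 1) ^ 2) * (1 / ((k : ℝ) + 1))) ?_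
    (by simpa using hinv.const_mul (100 * ((n : ℝ) + 1) ^ 2))
  intro k
  unfold apSh
  have h := apT_succ_le_one n k
  have h0 := apT_nonneg (n + 1) k
  have hn : (0 : ℝ) ≤ n := by positivity
  have hk : (0 : ℝ) ≤ k := by positivity
  rw [norm_mul, Real.norm_of_nonneg h0]
  have : ‖(((n : ℝ) + 2 + k) ^ 2 - 3 * (2 * n + 3) * ((n : ℝ) + 2 + k) - 11 * ((n : ℝ) + 1) ^ 2
    - 9 * ((n : ℝ) + 1) - 2)‖ ≤ 100 * ((n : ℝ) + 1) ^ 2 * ((k : ℝ) + 1) ^ 2 := by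
    rw [Real.norm_eq_abs, abs_le]
    have a1 := mul_nonneg hn hk
    have a2 := mul_nonneg a1 hn
    have a3 := mul_nonneg a1 hk
    have a4 := mul_nonneg a1 a1
    constructor <;> nlinarith
  calc _ ≤ (100 * ((n : ℝ) + 1) ^ 2 * ((k : ℝ) + 1) ^ 2) * (1 / ((k : ℝ) + 1) ^ 3) := by gcongr
    _ = _ := by field_simp

lemma apU_rec (n : ℕ) :
    ((n : ℝ) + 2) ^ 2 * (∑' k, apT (n + 2) k)
      + (11 * ((n : ℝ) + 1) ^ 2 + 11 * ((n : ℝ) + 1) + 3) * (∑' k, apT (n + 1) k)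
      - ((n : ℝ) + 1) ^ 2 * (∑' k, apT n k) = 0 := by
  have s0 := apT_summable n
  have s1 := apT_summable (n + 1)
  have s2 := apT_summable (n + 2)
  have s0' := (summable_nat_add_iff 2).2 s0
  have s1' := (summable_nat_add_iff 1).2 s1
  have H := ((s2.hasSum.mul_left (((n : ℝ) + 2) ^ 2)).add
    (s1'.hasSum.mul_left (11 * ((n : ℝ) + 1) ^ 2 + 11 * ((n : ℝ) + 1) + 3))).sub
    (s0'.hasSum.mul_left (((n : ℝ) + 1) ^ 2))
  simp only [apT_tele] at H
  have h1 := H.tendsto_sum_nat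
  have h2 : ∀ N, ∑ j ∈ range N, (apSh n (j + 2) - apSh n (j + 1)) = apSh n (N + 1) - apSh n 1 := by
    intro N
    exact Finset.sum_range_sub (fun j => apSh n (j + 1)) N
  simp only [h2] at h1
  have h3 : Tendsto (fun N => apSh n (N + 1) - apSh n 1) atTop (𝓝 (0 - apSh n 1)) :=
    ((tendsto_add_atTop_iff_nat 1).2 (apSh_tendsto n)).sub_const _
  have h4 := tendsto_nhds_unique h1 h3
  have b := apT_bdry n
  rw [← s1.sum_add_tsum_nat_add 1, ← s0.sum_add_tsum_nat_add 2]
  simp only [Finset.sum_range_succ, Finset.sum_range_zero, zero_add]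
  linarith

lemma apU_zero : ∑' k, apT 0 k = π ^ 2 / 6 := by
  have h := (hasSum_nat_add_iff' 1).2 hasSum_zeta_two
  simp only [apT_zero]
  have h2 := h.tsum_eq
  simp only [Nat.cast_add, Nat.cast_one] at h2
  rw [h2]
  simp

lemma apU_one : ∑' k, apT 1 k = 5 - 3 * (π ^ 2 / 6) := by
  have h2 := (hasSum_nat_add_iff' 3).2 hasSum_zeta_two
  have h1 := (hasSum_nat_add_iff' 2).2 hasSum_zeta_two
  have hinv : Tendsto (fun k : ℕ => 1 / ((k : ℝ) + 2)) atTop (𝓝 0) := by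
    have := (tendsto_add_atTop_iff_nat 1).2 (tendsto_one_div_add_atTop_nhds_zero_nat (𝕜 := ℝ))
    refine this.congr fun k => ?_
    push_cast; ring
  have h3 : HasSum (fun k : ℕ => 1 / ((k : ℝ) + 2) - 1 / ((k : ℝ) + 3)) (1 / 2) := by
    rw [hasSum_iff_tendsto_nat_of_nonneg]
    · have : ∀ N : ℕ, ∑ k ∈ range N, (1 / ((k : ℝ) + 2) - 1 / ((k : ℝ) + 3))
          = 1 / 2 - 1 / ((N : ℝ) + 2) := by
        intro N
        have := Finset.sum_range_sub' (fun k : ℕ => 1 / ((k : ℝ) + 2)) N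
        simp only [Nat.cast_zero, zero_add] at this
        rw [← this]
        apply Finset.sum_congr rfl
        intro k _
        push_cast; ring
      simp only [this]
      have h5 := hinv.const_sub (1 / 2)
      rwa [sub_zero] at h5
    · intro k
      rw [sub_nonneg]
      gcongr
      norm_num
  have H := ((h3.mul_left 3).sub (h1.mul_left 1)).sub (h2.mul_left 2)
  have e : ∀ k : ℕ, apT 1 k = 3 * (1 / ((k : ℝ) + 2) - 1 / ((k : ℝ) + 3))
      - 1 * (1 / ((k + 2 : ℕ) : ℝ) ^ 2) - 2 * (1 / ((k + 3 : ℕ) : ℝ) ^ 2) := by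
    intro k
    rw [apT_one]
    push_cast
    have e2' : (k : ℝ) + 2 ≠ 0 := by positivity
    have e3' : (k : ℝ) + 3 ≠ 0 := by positivity
    field_simp
    ring
  simp only [← e] at H
  rw [H.tsum_eq]
  simp [Finset.sum_range_succ]
  ring

noncomputable def apb (n k : ℕ) : ℝ := (Nat.choose n k : ℝ) ^ 2 * (Nat.choose (n + k) k : ℝ)

noncomputable def apc (n k : ℕ) : ℝ :=
  2 * (∑ m ∈ Icc 1 n, (-1 : ℝ) ^ (m - 1) / (m : ℝ) ^ 2)
      + ∑ m ∈ Icc 1 k,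
          (-1 : ℝ) ^ (n + m - 1) /
            ((m : ℝ) ^ 2 * (Nat.choose n m : ℝ) * (Nat.choose (n + m) m : ℝ))

lemma fac_ne' (n : ℕ) : (n.factorial : ℝ) ≠ 0 := by exact_mod_cast n.factorial_ne_zero

lemma choose_fac (k j : ℕ) : ((k + j).choose k : ℝ) =
    (k + j).factorial / (k.factorial * j.factorial) := Nat.cast_add_choose ℝ

lemma apb_fac (k j : ℕ) : apb (k + j) k =
    (k + j).factorial * (2 * k + j).factorial / (k.factorial ^ 3 * j.factorial ^ 2) := by
  unfold apb
  rw [show k + j + k = k + (k + j) by ring, choose_fac, choose_fac,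
    show k + (k + j) = 2 * k + j by ring]
  have h1 := fac_ne' k
  have h2 := fac_ne' j
  have h3 := fac_ne' (k + j)
  field_simp

lemma apc_succ (k j : ℕ) : apc (k + 1 + j) (k + 1) = apc (k + 1 + j) k +
    (-1) ^ (j + 1) * (k.factorial : ℝ) ^ 2 * j.factorial / (2 * k + j + 2).factorial := by
  unfold apc
  rw [Finset.sum_Icc_succ_top (by omega), show k + 1 + j + (k + 1) = k + 1 + (k + 1 + j) by ring,
    choose_fac, choose_fac, show k + 1 + (k + 1 + j) - 1 = 2 * k + (j + 1) by omega,
    show k + 1 + (k + 1 + j) = 2 * k + j + 2 by ring, pow_add (-1 : ℝ) (2 * k), pow_mul,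
    Nat.factorial_succ k]
  have h1 := fac_ne' k
  have h2 := fac_ne' j
  have h3 := fac_ne' (k + 1 + j)
  have h4 := fac_ne' (2 * k + j + 2)
  have e1 : (k : ℝ) + 1 ≠ 0 := by positivity
  push_cast
  field_simp
  simp
  ring

lemma apc_delta (k j : ℕ) : apc (k + j + 1) k = apc (k + j) k +
    2 * (-1) ^ j * (k.factorial : ℝ) ^ 2 * j.factorial /
      (((k : ℝ) + j + 1) * (2 * k + j + 1).factorial) := by
  induction k generalizing j with
  | zero =>
    unfold apc
    rw [Finset.sum_Icc_succ_top (by omega)]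
    have h2 := fac_ne' j
    simp [Nat.factorial_succ]
    field_simp
  | succ k ih =>
    have a1 := apc_succ k j
    have a2 := apc_succ k (j + 1)
    have a3 := ih (j + 1)
    rw [show k + (j + 1) + 1 = k + 1 + j + 1 by ring, show k + (j + 1) = k + 1 + j by ring] at a3
    rw [show k + 1 + (j + 1) = k + 1 + j + 1 by ring] at a2
    rw [a2, a3, a1]
    rw [show 2 * k + (j + 1) + 2 = 2 * k + j + 2 + 1 by ring,
      show 2 * k + (j + 1) + 1 = 2 * k + j + 2 by ring,
      show 2 * (k + 1) + j + 1 = 2 * k + j + 2 + 1 by ring]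
    simp only [Nat.factorial_succ k, Nat.factorial_succ j, Nat.factorial_succ (2 * k + j + 2),
      pow_succ (-1 : ℝ)]
    have h4 := fac_ne' (2 * k + j + 2)
    have e1 : (k : ℝ) + (j + 1) + 1 ≠ 0 := by positivity
    have e2 : (k : ℝ) + 1 + j + 1 ≠ 0 := by positivity
    have e3 : (2 * k + j + 2 + 1 : ℝ) ≠ 0 := by positivity
    push_cast
    generalize apc (k + 1 + j) k = c
    generalize ((2 * k + j + 2).factorial : ℝ) = b at *
    generalize (-1 : ℝ) ^ j = s
    field_simp
    ring

noncomputable def apS (n k : ℕ) : ℝ :=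
  ((k : ℝ) ^ 2 + 3 * (2 * n + 3) * k - 11 * ((n : ℝ) + 1) ^ 2 - 9 * ((n : ℝ) + 1) - 2) *
    apb (n + 1) k

noncomputable def apL (z : ℝ) (n k : ℕ) : ℝ :=
  ((n : ℝ) + 2) ^ 2 * (apb (n + 2) k * (z - apc (n + 2) k))
    - (11 * ((n : ℝ) + 1) ^ 2 + 11 * ((n : ℝ) + 1) + 3) * (apb (n + 1) k * (z - apc (n + 1) k))
    - ((n : ℝ) + 1) ^ 2 * (apb n k * (z - apc n k))

lemma apL_step (z : ℝ) (k j : ℕ) :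
    apS (k + 1 + j) k * (z - apc (k + 1 + j + 1) k)
      + 3 * (-1) ^ j * k * (k + 1 + j).factorial / (k.factorial * (j + 2).factorial)
      + apL z (k + 1 + j) (k + 1) =
    apS (k + 1 + j) (k + 1) * (z - apc (k + 1 + j + 1) (k + 1))
      - 3 * (-1) ^ j * (k + 1) * (k + 1 + j).factorial / ((k + 1).factorial * (j + 1).factorial) := by
  unfold apS apL
  have b0 := apb_fac (k + 1) j
  have b1 := apb_fac (k + 1) (j + 1)
  have b2 := apb_fac (k + 1) (j + 2)
  have b1' := apb_fac k (j + 2)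
  rw [show k + (j + 2) = k + 1 + j + 1 by ring] at b1'
  rw [show k + 1 + (j + 1) = k + 1 + j + 1 by ring] at b1
  rw [show k + 1 + (j + 2) = k + 1 + j + 2 by ring] at b2
  have d0 := apc_delta (k + 1) j
  have d1 := apc_delta (k + 1) (j + 1)
  rw [show k + 1 + (j + 1) = k + 1 + j + 1 by ring] at d1
  have c1 := apc_succ k (j + 1)
  rw [show k + 1 + (j + 1) = k + 1 + j + 1 by ring] at c1
  have c1' := sub_eq_of_eq_add c1
  have d0' := sub_eq_of_eq_add d0
  rw [show k + 1 + j + 1 + 1 = k + 1 + j + 2 by ring] at d1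
  rw [b0, b1, b2, b1', ← c1', d1, ← d0']
  rw [show k + 1 + j + 2 = k + 1 + j + 1 + 1 by ring,
    show 2 * (k + 1) + (j + 2) = 2 * k + j + 2 + 1 + 1 by ring,
    show 2 * (k + 1) + (j + 1) = 2 * k + j + 2 + 1 by ring,
    show 2 * k + (j + 1) + 2 = 2 * k + j + 2 + 1 by ring,
    show 2 * k + (j + 2) = 2 * k + j + 2 by ring,
    show 2 * (k + 1) + j = 2 * k + j + 2 by ring]
  simp only [Nat.factorial_succ k, Nat.factorial_succ j, Nat.factorial_succ (j + 1),
      Nat.factorial_succ (2 * k + j + 2), Nat.factorial_succ (2 * k + j + 2 + 1),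
      Nat.factorial_succ (k + 1 + j), Nat.factorial_succ (k + 1 + j + 1),
      pow_succ (-1 : ℝ)]
  have h1 := fac_ne' (2 * k + j + 2)
  have h2 := fac_ne' k
  have h3 := fac_ne' j
  have h4 := fac_ne' (k + 1 + j)
  push_cast
  generalize apc (k + 1 + j + 1) (k + 1) = c
  generalize ((2 * k + j + 2).factorial : ℝ) = b at *
  generalize (k.factorial : ℝ) = f at *
  generalize (j.factorial : ℝ) = g at *
  generalize ((k + 1 + j).factorial : ℝ) = h at *
  generalize (-1 : ℝ) ^ j = s
  have e0 : (j : ℝ) + 1 ≠ 0 := by positivity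
  have e0' : (j : ℝ) + 1 + 1 ≠ 0 := by positivity
  have e1 : (k : ℝ) + 1 + (j + 1) + 1 ≠ 0 := by positivity
  have e2 : (k : ℝ) + 1 + j + 1 ≠ 0 := by positivity
  have e3 : (2 * k + j + 2 + 1 : ℝ) ≠ 0 := by positivity
  have e4 : (2 * k + j + 2 + 1 + 1 : ℝ) ≠ 0 := by positivity
  have e5 : (k : ℝ) + 1 ≠ 0 := by positivity
  field_simp
  ring

lemma apL_zero (z : ℝ) (n : ℕ) : apL z n 0 = apS n 0 * (z - apc (n + 1) 0) := by
  unfold apL apS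
  have d0 := apc_delta 0 n
  have d1 := apc_delta 0 (n + 1)
  simp only [zero_add] at d0 d1
  have d0' := sub_eq_of_eq_add d0
  rw [d1, ← d0']
  have h3 := fac_ne' n
  simp [apb, Nat.factorial_succ, pow_succ (-1 : ℝ)]
  have e0 : (n : ℝ) + 1 ≠ 0 := by positivity
  have e0' : (n : ℝ) + 1 + 1 ≠ 0 := by positivity
  field_simp
  ring

lemma apL_sum (z : ℝ) (k : ℕ) : ∀ j : ℕ, ∑ i ∈ range (k + 1), apL z (k + j) i =
    apS (k + j) k * (z - apc (k + j + 1) k)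
      - 3 * (-1) ^ j * k * (k + j).factorial / (k.factorial * (j + 1).factorial) := by
  induction k with
  | zero => intro j; simp [apL_zero]
  | succ k ih =>
    intro j
    rw [Finset.sum_range_succ]
    have h := ih (j + 1)
    rw [show k + (j + 1) = k + 1 + j by ring] at h
    have s := apL_step z k j
    rw [h]
    push_cast
    rw [← s, pow_succ]
    ring

lemma apb_zero {n k : ℕ} (h : n < k) : apb n k = 0 := by
  simp [apb, Nat.choose_eq_zero_of_lt h]

lemma apL_total (z : ℝ) (n : ℕ) : ∑ i ∈ range (n + 3), apL z n i = 0 := by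
  rw [Finset.sum_range_succ, Finset.sum_range_succ]
  have h := apL_sum z n 0
  simp only [add_zero] at h
  rw [h]
  unfold apL apS
  rw [apb_zero (show n < n + 1 by omega), apb_zero (show n < n + 2 by omega),
    apb_zero (show n + 1 < n + 2 by omega)]
  have b0 := apb_fac n 1
  have b1 := apb_fac (n + 1) 0
  have b2 := apb_fac (n + 1) 1
  have b3 := apb_fac (n + 2) 0
  have d1 := apc_delta (n + 1) 0
  have c1 := apc_succ n 0
  have c2 := apc_succ (n + 1) 0
  simp only [add_zero] at b1 b3 d1 c1 c2
  rw [show n + 1 + 1 = n + 2 by ring] at b2 d1 c2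
  have c1' := sub_eq_of_eq_add c1
  rw [b0, b1, b2, b3, c2, d1, ← c1']
  rw [show 2 * (n + 1) + 1 = 2 * n + 1 + 1 + 1 by ring,
    show 2 * (n + 1) + 2 = 2 * n + 1 + 1 + 1 + 1 by ring,
    show 2 * (n + 2) = 2 * n + 1 + 1 + 1 + 1 by ring,
    show 2 * (n + 1) = 2 * n + 1 + 1 by ring,
    show 2 * n + 2 = 2 * n + 1 + 1 by ring,
    show n + 2 = n + 1 + 1 by ring]
  simp only [Nat.factorial_succ n, Nat.factorial_succ (n + 1),
      Nat.factorial_succ (2 * n + 1), Nat.factorial_succ (2 * n + 1 + 1),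
      Nat.factorial_succ (2 * n + 1 + 1 + 1), Nat.factorial_zero, Nat.factorial_one,
      zero_add, pow_zero, pow_one]
  have h1 := fac_ne' (2 * n + 1)
  have h2 := fac_ne' n
  push_cast
  generalize apc (n + 1) (n + 1) = c
  generalize ((2 * n + 1).factorial : ℝ) = b at *
  generalize (n.factorial : ℝ) = f at *
  have e0 : (n : ℝ) + 1 ≠ 0 := by positivity
  have e0' : (n : ℝ) + 1 + 1 ≠ 0 := by positivity
  have e1 : (2 * n + 1 + 1 : ℝ) ≠ 0 := by positivity
  have e2 : (2 * n + 1 + 1 + 1 : ℝ) ≠ 0 := by positivity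
  have e3 : (2 * n + 1 + 1 + 1 + 1 : ℝ) ≠ 0 := by positivity
  field_simp
  ring

noncomputable def apE (z : ℝ) (n : ℕ) : ℝ := ∑ k ∈ range (n + 1), apb n k * (z - apc n k)

lemma apE_ext (z : ℝ) (n d : ℕ) :
    apE z n = ∑ k ∈ range (n + d + 1), apb n k * (z - apc n k) := by
  unfold apE
  refine Finset.sum_subset (fun x hx => ?_) (fun x _ hx => ?_)
  · simp at hx ⊢; omega
  · simp at hx
    rw [apb_zero (by omega), zero_mul]

lemma apE_rec (z : ℝ) (n : ℕ) : ((n : ℝ) + 2) ^ 2 * apE z (n + 2)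
    - (11 * ((n : ℝ) + 1) ^ 2 + 11 * ((n : ℝ) + 1) + 3) * apE z (n + 1)
    - ((n : ℝ) + 1) ^ 2 * apE z n = 0 := by
  rw [← apL_total z n, apE_ext z (n + 2) 0, apE_ext z (n + 1) 1, apE_ext z n 2]
  rw [Finset.mul_sum, Finset.mul_sum, Finset.mul_sum, show n + 2 + 0 + 1 = n + 3 by ring,
    show n + 1 + 1 + 1 = n + 3 by ring, show n + 2 + 1 = n + 3 by ring,
    ← Finset.sum_sub_distrib, ← Finset.sum_sub_distrib]
  rfl

lemma apE_eq (z : ℝ) (n : ℕ) : aperyB2 n * z - aperyA2 n = apE z n := by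
  unfold aperyB2 aperyA2 apE
  rw [Finset.sum_mul, ← Finset.sum_sub_distrib]
  refine Finset.sum_congr rfl fun k _ => ?_
  unfold apb apc
  ring

lemma apE_apT (n : ℕ) : apE (π ^ 2 / 6) n = (-1) ^ n * ∑' k, apT n k ∧
    apE (π ^ 2 / 6) (n + 1) = (-1) ^ (n + 1) * ∑' k, apT (n + 1) k := by
  induction n with
  | zero =>
    rw [apU_zero, zero_add, apU_one]
    constructor
    · simp [apE, apb, apc]
    · simp [apE, apb, apc, Finset.sum_range_succ]
      ring
  | succ n ih =>
    refine ⟨ih.2, ?_⟩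
    have h1 := apE_rec (π ^ 2 / 6) n
    have h2 := apU_rec n
    rw [ih.1, ih.2] at h1
    have e : ((n : ℝ) + 2) ^ 2 ≠ 0 := by positivity
    apply mul_left_cancel₀ e
    rw [show n + 1 + 1 = n + 2 by ring]
    have h3 : ((n : ℝ) + 2) ^ 2 * ∑' k, apT (n + 2) k = ((n : ℝ) + 1) ^ 2 * (∑' k, apT n k)
     - (11 * ((n : ℝ) + 1) ^ 2 + 11 * ((n : ℝ) + 1) + 3) * (∑' k, apT (n + 1) k) := by linarith
    rw [mul_left_comm, h3]
    rw [pow_succ] at *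
    rw [pow_succ]
    linear_combination h1

open MeasureTheory

noncomputable def apν : Measure ℝ := volume.restrict (Set.Ioo (0 : ℝ) 1)

instance : IsFiniteMeasure apν := by
  unfold apν
  infer_instance

noncomputable def apμ : Measure (ℝ × ℝ) := apν.prod apν

lemma apμ_ae : ∀ᵐ z ∂apμ, (0 < z.1 ∧ z.1 < 1) ∧ (0 < z.2 ∧ z.2 < 1) := by
  unfold apμ apν
  rw [Measure.prod_restrict]
  filter_upwards [ae_restrict_mem (measurableSet_Ioo.prod measurableSet_Ioo)] with z hz
  exact hz

lemma apν_integrable {f : ℝ → ℝ} (hf : Continuous f) : Integrable f apν := by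
  unfold apν
  exact (hf.integrableOn_Icc (a := 0) (b := 1)).mono_set Set.Ioo_subset_Icc_self

lemma apν_pow (a : ℕ) : ∫ x, x ^ a ∂apν = 1 / ((a : ℝ) + 1) := by
  unfold apν
  rw [← integral_Ioc_eq_integral_Ioo, ← intervalIntegral.integral_of_le zero_le_one, integral_pow]
  simp

lemma apν_beta (a b : ℕ) : ∫ x, x ^ a * (1 - x) ^ b ∂apν =
    (a.factorial : ℝ) * b.factorial / (a + b + 1).factorial := by
  induction b generalizing a with
  | zero =>
    have := fac_ne a
    simp only [pow_zero, mul_one, apν_pow, Nat.factorial_zero, Nat.factorial_succ, add_zero]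
    push_cast
    field_simp
  | succ b ih =>
    have h : ∀ x : ℝ, x ^ a * (1 - x) ^ (b + 1) =
        x ^ a * (1 - x) ^ b - x ^ (a + 1) * (1 - x) ^ b := by intro x; ring
    simp only [h]
    rw [integral_sub (apν_integrable (by fun_prop)) (apν_integrable (by fun_prop)), ih, ih,
      show a + 1 + b + 1 = a + b + 1 + 1 by ring, show a + (b + 1) + 1 = a + b + 1 + 1 by ring]
    simp only [Nat.factorial_succ (a + b + 1), Nat.factorial_succ a, Nat.factorial_succ b]
    have h1 := fac_ne (a + b + 1)
    have e : ((a : ℝ) + b + 1 + 1) ≠ 0 := by positivity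
    push_cast
    field_simp
    ring

noncomputable def apF (p : ℕ × ℕ) (z : ℝ × ℝ) : ℝ :=
  ((-1) ^ p.1 * ((p.1 + p.2).choose p.1 : ℝ) * (z.1 ^ (p.1 + p.2) * (1 - z.1) ^ p.1)) *
    (z.2 ^ (p.1 + p.2) * (1 - z.2) ^ p.1)

lemma apF_integrable (p : ℕ × ℕ) : Integrable (apF p) apμ := by
  unfold apF apμ
  exact (apν_integrable (f := fun x => (-1) ^ p.1 * ((p.1 + p.2).choose p.1 : ℝ) *
    (x ^ (p.1 + p.2) * (1 - x) ^ p.1)) (by fun_prop)).mul_prod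
    (apν_integrable (f := fun x => x ^ (p.1 + p.2) * (1 - x) ^ p.1) (by fun_prop))

lemma apF_integral (p : ℕ × ℕ) : ∫ z, apF p z ∂apμ = (-1) ^ p.1 * apT p.1 p.2 := by
  unfold apF apμ
  rw [integral_prod_mul (fun x : ℝ => (-1) ^ p.1 * ((p.1 + p.2).choose p.1 : ℝ) *
    (x ^ (p.1 + p.2) * (1 - x) ^ p.1)) (fun x : ℝ => x ^ (p.1 + p.2) * (1 - x) ^ p.1),
    integral_const_mul, apν_beta, choose_fac]
  unfold apT
  rw [show p.1 + p.2 + p.1 + 1 = 2 * p.1 + p.2 + 1 by ring]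
  have h1 := fac_ne (p.1 + p.2)
  have h2 := fac_ne p.1
  have h3 := fac_ne p.2
  have h4 := fac_ne (2 * p.1 + p.2 + 1)
  field_simp

lemma apF_norm (p : ℕ × ℕ) : ∫ z, ‖apF p z‖ ∂apμ = apT p.1 p.2 := by
  have h : ∫ z, ‖apF p z‖ ∂apμ = ∫ z, (-1) ^ p.1 * apF p z ∂apμ := by
    refine integral_congr_ae ?_
    filter_upwards [apμ_ae] with z hz
    obtain ⟨⟨h1, h2⟩, h3, h4⟩ := hz
    have e : (-1 : ℝ) ^ p.1 * apF p z = (((p.1 + p.2).choose p.1 : ℝ) *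
        (z.1 ^ (p.1 + p.2) * (1 - z.1) ^ p.1)) * (z.2 ^ (p.1 + p.2) * (1 - z.2) ^ p.1) := by
      unfold apF
      have : (-1 : ℝ) ^ p.1 * (-1) ^ p.1 = 1 := by rw [← mul_pow]; simp
      linear_combination (((p.1 + p.2).choose p.1 : ℝ) *
        (z.1 ^ (p.1 + p.2) * (1 - z.1) ^ p.1)) * (z.2 ^ (p.1 + p.2) * (1 - z.2) ^ p.1) * this
    have e2 : ‖apF p z‖ = ‖(-1 : ℝ) ^ p.1 * apF p z‖ := by simp
    rw [e2, Real.norm_of_nonneg]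
    rw [e]
    have : 0 < 1 - z.1 := by linarith
    have : 0 < 1 - z.2 := by linarith
    positivity
  rw [h, integral_const_mul, apF_integral, ← mul_assoc, ← mul_pow]
  simp

lemma apT_summable_prod : Summable (fun p : ℕ × ℕ => apT p.1 p.2) := by
  refine Summable.of_nonneg_of_le (fun p => apT_nonneg _ _) (fun p => apT_le p.1 p.2) ?_
  exact Summable.mul_of_nonneg (f := fun n : ℕ => (1 / 2 : ℝ) ^ n)
    (g := fun k : ℕ => 1 / ((k : ℝ) + 1) ^ 2)
    (summable_geometric_of_lt_one (by norm_num) (by norm_num)) summable_inv_sq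
    (fun n => by positivity) (fun n => by positivity)

lemma hasSum_pair {u v : ℝ} (hu : 0 ≤ u) (hv : 0 ≤ v) (huv : u + v < 1) :
    HasSum (fun p : ℕ × ℕ => (-1) ^ p.1 * ((p.1 + p.2).choose p.1 : ℝ) * (u ^ p.1 * v ^ p.2))
      (1 / (1 - v + u)) := by
  have hv1 : 0 < 1 - v := by linarith
  have inner : ∀ n : ℕ, HasSum (fun k : ℕ => ((n + k).choose n : ℝ) * (u ^ n * v ^ k))
      (1 / (1 - v) * (u / (1 - v)) ^ n) := by
    intro n
    have h := (hasSum_choose_mul_geometric_of_norm_lt_one n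
      (r := v) (by rw [Real.norm_of_nonneg hv]; linarith)).mul_left (u ^ n)
    have e1 : (fun k : ℕ => ((n + k).choose n : ℝ) * (u ^ n * v ^ k)) =
        fun k : ℕ => u ^ n * (((k + n).choose n : ℝ) * v ^ k) := by
      funext k; rw [add_comm n k]; ring
    have e2 : 1 / (1 - v) * (u / (1 - v)) ^ n = u ^ n * (1 / (1 - v) ^ (n + 1)) := by
      rw [div_pow, pow_succ]; field_simp
    rw [e1, e2]
    exact h
  have hr0 : 0 ≤ u / (1 - v) := by positivity
  have hr1 : u / (1 - v) < 1 := by rw [div_lt_one hv1]; linarith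
  have hs : Summable (fun p : ℕ × ℕ => ((p.1 + p.2).choose p.1 : ℝ) * (u ^ p.1 * v ^ p.2)) := by
    rw [summable_prod_of_nonneg (fun p => by positivity)]
    refine ⟨fun n => (inner n).summable, ?_⟩
    simp only [(inner _).tsum_eq]
    exact (summable_geometric_of_lt_one hr0 hr1).mul_left _
  have hs2 : Summable (fun p : ℕ × ℕ => (-1) ^ p.1 * ((p.1 + p.2).choose p.1 : ℝ) *
      (u ^ p.1 * v ^ p.2)) := by
    refine Summable.of_norm_bounded hs fun p => ?_
    rw [mul_assoc, norm_mul, norm_pow, norm_neg, norm_one, one_pow, one_mul,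
      Real.norm_of_nonneg (by positivity)]
  have h1 := hs2.hasSum.prod_fiberwise (g := fun n => (-1) ^ n * (1 / (1 - v) * (u / (1 - v)) ^ n))
    (fun n => by
      have := (inner n).mul_left ((-1) ^ n)
      simpa only [mul_assoc] using this)
  have h2 : HasSum (fun n : ℕ => (-1) ^ n * (1 / (1 - v) * (u / (1 - v)) ^ n))
      (1 / (1 - v + u)) := by
    have := (hasSum_geometric_of_norm_lt_one (ξ := -(u / (1 - v)))
      (by rw [norm_neg, Real.norm_of_nonneg hr0]; exact hr1)).mul_left (1 / (1 - v))
    have e1 : (fun n : ℕ => (-1) ^ n * (1 / (1 - v) * (u / (1 - v)) ^ n)) =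
        fun n : ℕ => 1 / (1 - v) * (-(u / (1 - v))) ^ n := by
      funext n; rw [neg_pow (u / (1 - v))]; ring
    have e2 : 1 / (1 - v + u) = 1 / (1 - v) * (1 - -(u / (1 - v)))⁻¹ := by
      have : 1 - v + u ≠ 0 := by positivity
      have h7 : 1 - -(u / (1 - v)) = (1 - v + u) / (1 - v) := by field_simp; ring
      rw [h7]
      field_simp
    rw [e1, e2]
    exact this
  have h3 := h1.unique h2
  rw [← h3]
  exact hs2.hasSum

noncomputable def apD (z : ℝ × ℝ) : ℝ := 1 - z.1 * z.2 + z.1 * z.2 * ((1 - z.1) * (1 - z.2))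

lemma lhs_eq : ∑' n, apE (π ^ 2 / 6) n = ∫ z, 1 / apD z ∂apμ := by
  have H := hasSum_integral_of_summable_integral_norm (μ := apμ) apF_integrable
    (by simpa only [apF_norm] using apT_summable_prod)
  have e : ∫ z, (∑' p, apF p z) ∂apμ = ∫ z, 1 / apD z ∂apμ := by
    refine integral_congr_ae ?_
    filter_upwards [apμ_ae] with z hz
    obtain ⟨⟨h1, h2⟩, h3, h4⟩ := hz
    have h5 : 0 < 1 - z.1 := by linarith
    have h6 : 0 < 1 - z.2 := by linarith
    have h := hasSum_pair (u := z.1 * z.2 * ((1 - z.1) * (1 - z.2))) (v := z.1 * z.2)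
      (by positivity) (by positivity) (by
        have a1 : z.1 * z.2 < z.1 := by nlinarith
        have a2 : z.1 * z.2 * ((1 - z.1) * (1 - z.2)) < 1 * ((1 - z.1) * 1) := by
          apply mul_lt_mul'' (by nlinarith) (by nlinarith) (by positivity) (by positivity)
        linarith)
    unfold apD
    rw [← h.tsum_eq]
    refine tsum_congr fun p => ?_
    unfold apF
    simp only [pow_add, mul_pow]
    ring
  rw [e] at H
  simp only [apF_integral] at H
  rw [← H.tsum_eq, H.summable.tsum_prod]
  refine tsum_congr fun n => ?_
  rw [(apE_apT n).1]
  exact tsum_mul_left.symm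

noncomputable def apq (n : ℕ) : Polynomial ℝ := if n = 0 then 1 else pzeta n

lemma apq_rec (n : ℕ) : apq (n + 2) = X ^ 2 * apq (n + 1) + X * (1 - X) * apq n := by
  cases n with
  | zero => simp [apq, pzeta]; ring
  | succ n => simp [apq, pzeta]

lemma apq_eval (n : ℕ) (t : ℝ) : (apq (n + 2)).eval t =
    t ^ 2 * (apq (n + 1)).eval t + t * (1 - t) * (apq n).eval t := by
  rw [apq_rec]; simp

lemma apq_bd {t : ℝ} (h0 : 0 < t) (h1 : t < 1) (n : ℕ) :
    (0 ≤ (apq n).eval t ∧ (apq n).eval t ≤ 1) ∧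
    (0 ≤ (apq (n + 1)).eval t ∧ (apq (n + 1)).eval t ≤ 1) := by
  induction n with
  | zero =>
    simp [apq, pzeta]
    constructor
    · positivity
    · rw [abs_of_pos h0]; exact h1.le
  | succ n ih =>
    refine ⟨ih.2, ?_⟩
    rw [apq_eval]
    obtain ⟨⟨a, b⟩, c, d⟩ := ih
    have e : 0 < 1 - t := by linarith
    have e2 : 0 < t * (1 - t) := by positivity
    constructor
    · positivity
    · have := mul_le_mul_of_nonneg_left d (sq_nonneg t)
      have := mul_le_mul_of_nonneg_left b e2.le
      nlinarith

lemma apq_deg (n : ℕ) : (apq n).natDegree ≤ 2 * n ∧ (apq (n + 1)).natDegree ≤ 2 * (n + 1) := by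
  induction n with
  | zero => simp [apq, pzeta]
  | succ n ih =>
    refine ⟨ih.2, ?_⟩
    rw [show n + 1 + 1 = n + 2 by ring, apq_rec]
    refine (natDegree_add_le _ _).trans (max_le ?_ ?_)
    · refine natDegree_mul_le.trans ?_
      have : (X ^ 2 : Polynomial ℝ).natDegree ≤ 2 := natDegree_X_pow_le 2
      omega
    · refine natDegree_mul_le.trans ?_
      have : (X * (1 - X) : Polynomial ℝ).natDegree ≤ 2 := by compute_degree
      omega

lemma apD_eq (x t : ℝ) : apD (x, t) = 1 - x * t ^ 2 - x ^ 2 * (t * (1 - t)) := by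
  unfold apD; ring

lemma apq_partial (x t : ℝ) (N : ℕ) :
    apD (x, t) * ∑ i ∈ range (N + 1), x ^ i * (apq i).eval t =
      1 - x ^ (N + 1) * (apq (N + 1)).eval t - x ^ (N + 2) * (t * (1 - t)) * (apq N).eval t := by
  rw [apD_eq]
  induction N with
  | zero => simp [apq, pzeta]
  | succ N ih =>
    rw [Finset.sum_range_succ, mul_add, ih, show N + 1 + 1 = N + 2 by ring, apq_eval]
    ring

lemma apD_ge {x t : ℝ} (hx : 0 < x ∧ x < 1) (ht : 0 < t ∧ t < 1) :
    0 < 1 - x * t ∧ 1 - x * t ≤ apD (x, t) := by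
  have h5 : 0 < 1 - x := by linarith
  have h6 : 0 < 1 - t := by linarith
  obtain ⟨h1, h2⟩ := hx
  obtain ⟨h3, h4⟩ := ht
  constructor
  · nlinarith
  · unfold apD
    have : 0 < x * t * ((1 - x) * (1 - t)) := by positivity
    simp only
    linarith

lemma apq_hasSum {x t : ℝ} (hx : 0 < x ∧ x < 1) (ht : 0 < t ∧ t < 1) :
    HasSum (fun i : ℕ => x ^ i * (apq i).eval t) (1 / apD (x, t)) := by
  obtain ⟨hd1, hd2⟩ := apD_ge hx ht
  have hD : apD (x, t) ≠ 0 := by linarith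
  have bd := fun n => (apq_bd ht.1 ht.2 n).1
  have hx0 := hx.1.le
  rw [hasSum_iff_tendsto_nat_of_nonneg (fun i => mul_nonneg (pow_nonneg hx0 i) (bd i).1),
    ← tendsto_add_atTop_iff_nat 1]
  have hp := tendsto_pow_atTop_nhds_zero_of_lt_one hx0 hx.2
  have t0 : Tendsto (fun i : ℕ => x ^ i * (apq i).eval t) atTop (𝓝 0) := by
    refine squeeze_zero (fun i => mul_nonneg (pow_nonneg hx0 i) (bd i).1) (fun i => ?_) hp
    exact mul_le_of_le_one_right (pow_nonneg hx0 i) (bd i).2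
  have t1 := (tendsto_add_atTop_iff_nat 1).2 t0
  have t2 := ((t1.const_sub 1).sub (t0.mul_const (x ^ 2 * (t * (1 - t))))).div_const (apD (x, t))
  simp only [sub_zero, zero_mul] at t2
  refine t2.congr fun N => ?_
  rw [div_eq_iff hD, mul_comm _ (apD (x, t)), apq_partial]
  ring

lemma apK_integrable : Integrable (fun z : ℝ × ℝ => ∑' k : ℕ, z.1 ^ k * z.2 ^ k) apμ := by
  have hint : ∀ k : ℕ, Integrable (fun z : ℝ × ℝ => z.1 ^ k * z.2 ^ k) apμ := fun k =>
    (apν_integrable (f := fun x => x ^ k) (by fun_prop)).mul_prod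
      (apν_integrable (f := fun x => x ^ k) (by fun_prop))
  have hval : ∀ k : ℕ, ∫ z, z.1 ^ k * z.2 ^ k ∂apμ = 1 / ((k : ℝ) + 1) ^ 2 := by
    intro k
    unfold apμ
    rw [integral_prod_mul (fun x : ℝ => x ^ k) (fun x : ℝ => x ^ k), apν_pow]
    field_simp
  have hnorm : ∀ k : ℕ, ∫ z, ‖z.1 ^ k * z.2 ^ k‖ ∂apμ = 1 / ((k : ℝ) + 1) ^ 2 := by
    intro k
    rw [← hval k]
    refine integral_congr_ae ?_
    filter_upwards [apμ_ae] with z hz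
    obtain ⟨⟨h1, h2⟩, h3, h4⟩ := hz
    exact Real.norm_of_nonneg (by positivity)
  have H := hasSum_integral_of_summable_integral_norm hint
    (by simpa only [hnorm] using summable_inv_sq)
  simp only [hval] at H
  by_contra hc
  rw [integral_undef hc] at H
  have := le_hasSum H 0 (fun k _ => by positivity)
  norm_num at this

lemma apH_integrable (n : ℕ) : Integrable (fun z : ℝ × ℝ => z.1 ^ n * (apq n).eval z.2) apμ :=
  (apν_integrable (f := fun x => x ^ n) (by fun_prop)).mul_prod
    (apν_integrable (f := fun x => (apq n).eval x) (apq n).continuous)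

lemma apH_integral (n : ℕ) : ∫ z, z.1 ^ n * (apq n).eval z.2 ∂apμ =
    ∑ μ ∈ range (2 * n + 1), (apq n).coeff μ / (((n : ℝ) + 1) * ((μ : ℝ) + 1)) := by
  unfold apμ
  rw [integral_prod_mul (fun x : ℝ => x ^ n) (fun x : ℝ => (apq n).eval x), apν_pow]
  have e : ∀ x : ℝ, (apq n).eval x = ∑ i ∈ range (2 * n + 1), (apq n).coeff i * x ^ i := fun x =>
    eval_eq_sum_range' (by have := (apq_deg n).1; omega) x
  simp only [e]
  rw [integral_finsetSum _ (fun i _ => apν_integrable (by fun_prop)), Finset.mul_sum]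
  refine Finset.sum_congr rfl fun i _ => ?_
  rw [integral_const_mul, apν_pow]
  field_simp

lemma rhs_hasSum : HasSum (fun n : ℕ => ∑ μ ∈ range (2 * n + 1),
    (apq n).coeff μ / (((n : ℝ) + 1) * ((μ : ℝ) + 1))) (∫ z, 1 / apD z ∂apμ) := by
  have hnn : ∀ᵐ z ∂apμ, ∀ n : ℕ, 0 ≤ z.1 ^ n * (apq n).eval z.2 := by
    filter_upwards [apμ_ae] with z hz n
    exact mul_nonneg (pow_nonneg hz.1.1.le n) (apq_bd hz.2.1 hz.2.2 n).1.1
  have hnorm : ∀ n : ℕ, ∫ z, ‖z.1 ^ n * (apq n).eval z.2‖ ∂apμ =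
      ∫ z, z.1 ^ n * (apq n).eval z.2 ∂apμ := by
    intro n
    refine integral_congr_ae ?_
    filter_upwards [hnn] with z hz
    exact Real.norm_of_nonneg (hz n)
  have hs : Summable (fun n : ℕ => ∫ z, z.1 ^ n * (apq n).eval z.2 ∂apμ) := by
    refine summable_of_sum_range_le (c := ∫ z, (∑' k : ℕ, z.1 ^ k * z.2 ^ k) ∂apμ)
      (fun n => ?_) (fun N => ?_)
    · rw [← hnorm]
      exact integral_nonneg fun z => norm_nonneg _
    · rw [← integral_finsetSum _ (fun i _ => apH_integrable i)]
      refine integral_mono_ae (integrable_finsetSum _ fun i _ => apH_integrable i)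
        apK_integrable ?_
      filter_upwards [hnn, apμ_ae] with z h0 hz
      have h1 := sum_le_hasSum (range N) (fun i _ => h0 i) (apq_hasSum hz.1 hz.2)
      obtain ⟨h2, h3⟩ := apD_ge hz.1 hz.2
      have h4 : ∑' k : ℕ, z.1 ^ k * z.2 ^ k = 1 / (1 - z.1 * z.2) := by
        simp only [← mul_pow]
        rw [tsum_geometric_of_lt_one (mul_nonneg hz.1.1.le hz.2.1.le) (by linarith), one_div]
      rw [h4]
      exact h1.trans (one_div_le_one_div_of_le h2 h3)
  have H := hasSum_integral_of_summable_integral_norm apH_integrable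
    (by simpa only [hnorm] using hs)
  simp only [apH_integral] at H
  have e : ∫ z, 1 / apD z ∂apμ = ∫ z, (∑' n : ℕ, z.1 ^ n * (apq n).eval z.2) ∂apμ := by
    refine integral_congr_ae ?_
    filter_upwards [apμ_ae] with z hz
    exact (apq_hasSum hz.1 hz.2).tsum_eq.symm
  rw [e]
  exact H

/-- **The signed error sum of Apéry's continued fraction for `ζ(2)` via the
coefficients `a_{ν,μ}`.**
`∑ₙ (Bₙ ζ(2) − Aₙ) = 1 + ∑_{ν=1}^∞ ∑_{μ=0}^{2ν} a_{ν,μ}/((ν+1)(μ+1))`,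
where `ζ(2) = π²/6`. -/
theorem error_sum_apery_zeta_two_coeff :
    ∑' n : ℕ, (aperyB2 n * (π ^ 2 / 6) - aperyA2 n)
      = 1 + ∑' ν : ℕ, ∑ μ ∈ range (2 * (ν + 1) + 1),
          azeta (ν + 1) μ / (((ν : ℝ) + 2) * ((μ : ℝ) + 1)) := by
  simp only [apE_eq]
  rw [lhs_eq, ← rhs_hasSum.tsum_eq, rhs_hasSum.summable.tsum_eq_zero_add]
  congr 1
  · simp [apq]
  · refine tsum_congr fun n => Finset.sum_congr rfl fun m _ => ?_
    simp only [apq, azeta, Nat.succ_ne_zero, if_false]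
    push_cast
    ring
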